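/- Let F be a forest on the vertex set [n+1] with l edges, let R be any S-reduction tree with root F, and let f_{F,l} be the number of leaves of R whose label has exactly l edges. Then #(tP(F) ∩ ℤ^{n+1}) / t^l tends to f_{F,l} / l! as the positive integer t tends to infinity; i.e., the normalized l-dimensional volume of P(F) is f_{F,l} · (1/l!). -/

import Mathlib

open scoped BigOperators

namespace RPaper

abbrev Vtype (n : ℕ) := Fin (n+1) → ℝ

abbrev Edge (n : ℕ) := Fin (n+1) × Fin (n+1)

abbrev EdgeSet (n : ℕ) := Finset (Edge n)

/-- The vector `e_i - e_j`. -/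
def ev {n : ℕ} (i j : Fin (n+1)) : Vtype n := Pi.single i 1 - Pi.single j 1

/-- Edges are stored as pairs `(i,j)` with `i < j`. -/
def IsGraph {n : ℕ} (E : EdgeSet n) : Prop := ∀ e ∈ E, e.1 < e.2

/-- The simple graph underlying an edge set. -/
def toSG {n : ℕ} (E : EdgeSet n) : SimpleGraph (Fin (n+1)) :=
  SimpleGraph.fromRel (fun a b => (a, b) ∈ E)

def Acyclic {n : ℕ} (E : EdgeSet n) : Prop := (toSG E).IsAcyclic

def IsForest {n : ℕ} (E : EdgeSet n) : Prop := IsGraph E ∧ Acyclic E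

/-- A tree on the full vertex set `[n+1]`: connected and acyclic. -/
def IsTreeG {n : ℕ} (E : EdgeSet n) : Prop := IsGraph E ∧ (toSG E).IsTree

def Noncrossing {n : ℕ} (E : EdgeSet n) : Prop :=
  ¬ ∃ i j k l : Fin (n+1), i < j ∧ j < k ∧ k < l ∧ (i, k) ∈ E ∧ (j, l) ∈ E

def Alternating {n : ℕ} (E : EdgeSet n) : Prop :=
  ¬ ∃ i j k : Fin (n+1), i < j ∧ j < k ∧ (i, j) ∈ E ∧ (j, k) ∈ E

/-- The positive roots `e_i - e_j`, `i < j`. -/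
def PhiPlus (n : ℕ) : Set (Vtype n) := {v | ∃ i j : Fin (n+1), i < j ∧ v = ev i j}

/-- The cone of nonnegative combinations of the vectors of `E`. -/
def cone {n : ℕ} (E : EdgeSet n) : Set (Vtype n) :=
  {x | ∃ c : Edge n → ℝ, (∀ e, 0 ≤ c e) ∧ x = ∑ e ∈ E, c e • ev e.1 e.2}

def Vbar {n : ℕ} (E : EdgeSet n) : Set (Vtype n) := PhiPlus n ∩ cone E

/-- The root polytope of a graph. -/
def RootPoly {n : ℕ} (E : EdgeSet n) : Set (Vtype n) := convexHull ℝ ({0} ∪ Vbar E)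

/-- The full root polytope `P(A_n^+)`. -/
def FullRootPoly (n : ℕ) : Set (Vtype n) := convexHull ℝ ({0} ∪ PhiPlus n)

/-- Transitive closure: `(i,j)`, `i<j`, whenever there is an increasing path in `E`. -/
def closureT {n : ℕ} (E : EdgeSet n) : Set (Edge n) :=
  {p | p.1 < p.2 ∧ Relation.TransGen (fun a b => a < b ∧ (a, b) ∈ E) p.1 p.2}

/-- Noncrossing alternating spanning trees of the transitive closure of `E`. -/
def NCASpanningTrees {n : ℕ} (E : EdgeSet n) : Set (EdgeSet n) :=
  {F | IsTreeG F ∧ Noncrossing F ∧ Alternating F ∧ ↑F ⊆ closureT E}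

/-- The `t`-th dilate of a set. -/
def dilate {n : ℕ} (t : ℕ) (P : Set (Vtype n)) : Set (Vtype n) := (fun x => (t : ℝ) • x) '' P

/-- Number of lattice points of the `t`-th dilate. -/
noncomputable def latticeCount {n : ℕ} (P : Set (Vtype n)) (t : ℕ) : ℕ :=
  Set.ncard {x ∈ dilate t P | ∀ i, ∃ z : ℤ, x i = (z : ℝ)}

/-- Dimension of the affine span of a set. -/
noncomputable def polyDim {n : ℕ} (P : Set (Vtype n)) : ℕ :=
  Module.finrank ℝ (affineSpan ℝ P).direction

/-- The points `0` and `e_i - e_j`, `(i,j) ∈ F`. -/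
def vertSet {n : ℕ} (F : EdgeSet n) : Set (Vtype n) :=
  {0} ∪ {v | ∃ e ∈ F, v = ev e.1 e.2}

def red1 {n : ℕ} (E : EdgeSet n) (i j k : Fin (n+1)) : EdgeSet n :=
  insert (i, k) (E.erase (j, k))

def red2 {n : ℕ} (E : EdgeSet n) (i j k : Fin (n+1)) : EdgeSet n :=
  insert (i, k) (E.erase (i, j))

def red3 {n : ℕ} (E : EdgeSet n) (i j k : Fin (n+1)) : EdgeSet n :=
  insert (i, k) ((E.erase (i, j)).erase (j, k))

/-- Finite ternary trees with nodes labeled by graphs on `[n+1]`. -/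
inductive SRTree (n : ℕ) : Type
  | leaf : EdgeSet n → SRTree n
  | node : EdgeSet n → SRTree n → SRTree n → SRTree n → SRTree n

namespace SRTree

def root {n : ℕ} : SRTree n → EdgeSet n
  | leaf E => E
  | node E _ _ _ => E

/-- An S-reduction tree: every internal node's children come from a reduction of its
label, and every leaf is labeled by an alternating graph. -/
def Valid {n : ℕ} : SRTree n → Prop
  | leaf E => Alternating E
  | node E t1 t2 t3 =>
      (∃ i j k : Fin (n+1), i < j ∧ j < k ∧ (i, j) ∈ E ∧ (j, k) ∈ E ∧
        t1.root = red1 E i j k ∧ t2.root = red2 E i j k ∧ t3.root = red3 E i j k) ∧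
      t1.Valid ∧ t2.Valid ∧ t3.Valid

/-- Number of leaves labeled by a graph with exactly `k` edges. -/
def leafCount {n : ℕ} (k : ℕ) : SRTree n → ℕ
  | leaf E => if E.card = k then 1 else 0
  | node _ t1 t2 t3 => leafCount k t1 + leafCount k t2 + leafCount k t3

end SRTree

/-- Edge sets admitting integral dual functionals. -/
def Good {n : ℕ} (E : EdgeSet n) : Prop :=
  IsGraph E ∧ ∀ e ∈ E, ∃ φ : Fin (n+1) → ℤ, φ e.1 - φ e.2 = 1 ∧
    ∀ f ∈ E, f ≠ e → φ f.1 = φ f.2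

theorem good_of_forest {n : ℕ} {E : EdgeSet n} (h : IsForest E) : Good E := by
  classical
  refine ⟨h.1, ?_⟩
  rintro ⟨a, b⟩ he
  have hab : a < b := h.1 _ he
  have hadj : (toSG E).Adj a b := by
    simp only [toSG, SimpleGraph.fromRel_adj]
    exact ⟨hab.ne, Or.inl he⟩
  have hb := SimpleGraph.isAcyclic_iff_forall_adj_isBridge.mp h.2 hadj
  rw [SimpleGraph.isBridge_iff] at hb
  set H := (toSG E).deleteEdges {s(a, b)} with hH
  refine ⟨fun v => if H.Reachable a v then 1 else 0, ?_, ?_⟩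
  · simp [hb]
  · rintro ⟨c, d⟩ hf hne
    have hcd : c < d := h.1 _ hf
    have hadj' : H.Adj c d := by
      rw [hH, SimpleGraph.deleteEdges_adj]
      refine ⟨?_, ?_⟩
      · simp only [toSG, SimpleGraph.fromRel_adj]
        exact ⟨hcd.ne, Or.inl hf⟩
      · simp only [Set.mem_singleton_iff, Sym2.eq_iff, not_or]
        refine ⟨fun hh => hne (by rw [hh.1, hh.2]), fun hh => ?_⟩
        rw [hh.1, hh.2] at hcd
        exact absurd hcd (not_lt.mpr hab.le)
    have : H.Reachable a c ↔ H.Reachable a d :=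
      ⟨fun q => q.trans hadj'.reachable, fun q => q.trans hadj'.symm.reachable⟩
    simp [this]

theorem good_mono {n : ℕ} {E E' : EdgeSet n} (h : Good E) (hs : E' ⊆ E) : Good E' := by
  refine ⟨fun e he => h.1 e (hs he), fun e he => ?_⟩
  obtain ⟨φ, h1, h2⟩ := h.2 e (hs he)
  exact ⟨φ, h1, fun f hf hne => h2 f (hs hf) hne⟩

theorem good_not_mem {n : ℕ} {E : EdgeSet n} (h : Good E) {i j k : Fin (n+1)}
    (hij : i < j) (hjk : j < k) (h1 : (i, j) ∈ E) (h2 : (j, k) ∈ E) : (i, k) ∉ E := by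
  intro h3
  obtain ⟨φ, ha, hb⟩ := h.2 _ h3
  have e1 := hb _ h1 (by simp [hjk.ne])
  have e2 := hb _ h2 (by simp [hij.ne'])
  simp only at ha e1 e2
  omega

theorem good_red1 {n : ℕ} {E : EdgeSet n} (h : Good E) {i j k : Fin (n+1)}
    (hij : i < j) (hjk : j < k) (h1 : (i, j) ∈ E) (h2 : (j, k) ∈ E) : Good (red1 E i j k) := by
  have h3 := good_not_mem h hij hjk h1 h2
  have hne : ((i, j) : Edge n) ≠ (j, k) := by simp [hij.ne]
  obtain ⟨p, pa, pb⟩ := h.2 _ h1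
  obtain ⟨q, qa, qb⟩ := h.2 _ h2
  have pq := pb _ h2 hne.symm
  have qp := qb _ h1 hne
  simp only at pa qa pq qp
  refine ⟨?_, ?_⟩
  · intro e he
    simp only [red1, Finset.mem_insert, Finset.mem_erase] at he
    rcases he with rfl | ⟨_, he⟩
    · exact hij.trans hjk
    · exact h.1 e he
  · intro e he
    simp only [red1, Finset.mem_insert, Finset.mem_erase] at he
    rcases he with rfl | ⟨hejk, he⟩
    · refine ⟨q, by simp only; omega, ?_⟩
      intro f hf hfe
      simp only [red1, Finset.mem_insert, Finset.mem_erase] at hf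
      rcases hf with rfl | ⟨hf1, hf⟩
      · exact absurd rfl hfe
      · exact qb f hf hf1
    · by_cases hc : e = (i, j)
      · subst hc
        refine ⟨p - q, by simp only [Pi.sub_apply]; omega, ?_⟩
        intro f hf hfe
        simp only [red1, Finset.mem_insert, Finset.mem_erase] at hf
        rcases hf with rfl | ⟨hf1, hf⟩
        · simp only [Pi.sub_apply]; omega
        · have := pb f hf hfe
          have := qb f hf hf1
          simp only [Pi.sub_apply]; omega
      · obtain ⟨φ, ha, hb⟩ := h.2 _ he
        refine ⟨φ, ha, ?_⟩
        intro f hf hfe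
        simp only [red1, Finset.mem_insert, Finset.mem_erase] at hf
        rcases hf with rfl | ⟨hf1, hf⟩
        · exact (hb _ h1 (Ne.symm hc)).trans (hb _ h2 (Ne.symm hejk))
        · exact hb f hf hfe

theorem good_red2 {n : ℕ} {E : EdgeSet n} (h : Good E) {i j k : Fin (n+1)}
    (hij : i < j) (hjk : j < k) (h1 : (i, j) ∈ E) (h2 : (j, k) ∈ E) : Good (red2 E i j k) := by
  have h3 := good_not_mem h hij hjk h1 h2
  have hne : ((i, j) : Edge n) ≠ (j, k) := by simp [hij.ne]
  obtain ⟨p, pa, pb⟩ := h.2 _ h1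
  obtain ⟨q, qa, qb⟩ := h.2 _ h2
  have pq := pb _ h2 hne.symm
  have qp := qb _ h1 hne
  simp only at pa qa pq qp
  refine ⟨?_, ?_⟩
  · intro e he
    simp only [red2, Finset.mem_insert, Finset.mem_erase] at he
    rcases he with rfl | ⟨_, he⟩
    · exact hij.trans hjk
    · exact h.1 e he
  · intro e he
    simp only [red2, Finset.mem_insert, Finset.mem_erase] at he
    rcases he with rfl | ⟨hejk, he⟩
    · refine ⟨p, by simp only; omega, ?_⟩
      intro f hf hfe
      simp only [red2, Finset.mem_insert, Finset.mem_erase] at hf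
      rcases hf with rfl | ⟨hf1, hf⟩
      · exact absurd rfl hfe
      · exact pb f hf hf1
    · by_cases hc : e = (j, k)
      · subst hc
        refine ⟨q - p, by simp only [Pi.sub_apply]; omega, ?_⟩
        intro f hf hfe
        simp only [red2, Finset.mem_insert, Finset.mem_erase] at hf
        rcases hf with rfl | ⟨hf1, hf⟩
        · simp only [Pi.sub_apply]; omega
        · have := qb f hf hfe
          have := pb f hf hf1
          simp only [Pi.sub_apply]; omega
      · obtain ⟨φ, ha, hb⟩ := h.2 _ he
        refine ⟨φ, ha, ?_⟩
        intro f hf hfe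
        simp only [red2, Finset.mem_insert, Finset.mem_erase] at hf
        rcases hf with rfl | ⟨hf1, hf⟩
        · exact (hb _ h1 (Ne.symm hejk)).trans (hb _ h2 (Ne.symm hc))
        · exact hb f hf hfe

theorem red3_sub_red1 {n : ℕ} (E : EdgeSet n) (i j k : Fin (n+1)) :
    red3 E i j k ⊆ red1 E i j k := by
  intro e he
  simp only [red1, red3, Finset.mem_insert, Finset.mem_erase] at *
  tauto

theorem good_red3 {n : ℕ} {E : EdgeSet n} (h : Good E) {i j k : Fin (n+1)}
    (hij : i < j) (hjk : j < k) (h1 : (i, j) ∈ E) (h2 : (j, k) ∈ E) : Good (red3 E i j k) :=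
  good_mono (good_red1 h hij hjk h1 h2) (red3_sub_red1 E i j k)

theorem card_red1 {n : ℕ} {E : EdgeSet n} (i j k : Fin (n+1))
    (h2 : (j, k) ∈ E) : (red1 E i j k).card ≤ E.card := by
  have := Finset.card_insert_le (i, k) (E.erase (j, k))
  have h := Finset.card_erase_add_one h2
  unfold red1; omega

theorem card_red2 {n : ℕ} {E : EdgeSet n} (i j k : Fin (n+1))
    (h1 : (i, j) ∈ E) : (red2 E i j k).card ≤ E.card := by
  have := Finset.card_insert_le (i, k) (E.erase (i, j))
  have h := Finset.card_erase_add_one h1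
  unfold red2; omega

theorem card_red3 {n : ℕ} {E : EdgeSet n} {i j k : Fin (n+1)} (hij : i < j)
    (h1 : (i, j) ∈ E) (h2 : (j, k) ∈ E) : (red3 E i j k).card < E.card := by
  have := Finset.card_insert_le (i, k) ((E.erase (i, j)).erase (j, k))
  have h := Finset.card_erase_add_one h1
  have h2' : (j, k) ∈ E.erase (i, j) := by simp [h2, hij.ne']
  have h' := Finset.card_erase_add_one h2'
  unfold red3; omega

/-- Pairing with an integer vector. -/
noncomputable def pr {n : ℕ} (φ : Fin (n+1) → ℤ) (x : Vtype n) : ℝ := ∑ i, (φ i : ℝ) * x i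

theorem pr_add {n : ℕ} (φ : Fin (n+1) → ℤ) (x y : Vtype n) : pr φ (x + y) = pr φ x + pr φ y := by
  simp [pr, mul_add, Finset.sum_add_distrib]

theorem pr_smul {n : ℕ} (φ : Fin (n+1) → ℤ) (c : ℝ) (y : Vtype n) :
    pr φ (c • y) = c * pr φ y := by
  simp only [pr, Finset.mul_sum, Pi.smul_apply, smul_eq_mul]
  exact Finset.sum_congr rfl fun i _ => by ring

theorem pr_sum {n : ℕ} {ι : Type*} (φ : Fin (n+1) → ℤ) (s : Finset ι) (f : ι → Vtype n) :
    pr φ (∑ e ∈ s, f e) = ∑ e ∈ s, pr φ (f e) := by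
  classical
  induction s using Finset.induction_on with
  | empty => simp [pr]
  | insert a s ha ih => rw [Finset.sum_insert ha, Finset.sum_insert ha, pr_add, ih]

theorem pr_ev {n : ℕ} (φ : Fin (n+1) → ℤ) (a b : Fin (n+1)) : pr φ (ev a b) = φ a - φ b := by
  simp [pr, ev, mul_sub, Finset.sum_sub_distrib, Pi.single_apply]

theorem pr_dual {n : ℕ} {E : EdgeSet n} {e : Edge n} (he : e ∈ E) {φ : Fin (n+1) → ℤ}
    (h1 : φ e.1 - φ e.2 = 1) (h2 : ∀ f ∈ E, f ≠ e → φ f.1 = φ f.2) (c : Edge n → ℝ) :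
    pr φ (∑ f ∈ E, c f • ev f.1 f.2) = c e := by
  rw [pr_sum, Finset.sum_eq_single_of_mem e he]
  · rw [pr_smul, pr_ev]
    have : (φ e.1 : ℝ) - φ e.2 = 1 := by exact_mod_cast h1
    rw [this, mul_one]
  · intro f hf hfe
    rw [pr_smul, pr_ev, h2 f hf hfe]; simp

theorem pr_cone_zero {n : ℕ} {B : EdgeSet n} {φ : Fin (n+1) → ℤ}
    (h2 : ∀ f ∈ B, φ f.1 = φ f.2) {b : Vtype n} (hb : b ∈ cone B) : pr φ b = 0 := by
  obtain ⟨c, -, rfl⟩ := hb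
  rw [pr_sum]
  apply Finset.sum_eq_zero
  intro f hf
  rw [pr_smul, pr_ev, h2 f hf]; simp

theorem mem_cone_insert {n : ℕ} {B : EdgeSet n} {a : Edge n} (ha : a ∉ B) (x : Vtype n) :
    x ∈ cone (insert a B) ↔ ∃ s : ℝ, 0 ≤ s ∧ ∃ b ∈ cone B, x = s • ev a.1 a.2 + b := by
  constructor
  · rintro ⟨c, hc, rfl⟩
    exact ⟨c a, hc a, _, ⟨c, hc, rfl⟩, Finset.sum_insert ha⟩
  · rintro ⟨s, hs, b, ⟨c, hc, rfl⟩, rfl⟩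
    refine ⟨Function.update c a s, ?_, ?_⟩
    · intro e
      by_cases h : e = a
      · subst h; simpa using hs
      · simpa [h] using hc e
    · rw [Finset.sum_insert ha]
      congr 1
      · simp
      · refine Finset.sum_congr rfl fun e he => ?_
        rw [Function.update_of_ne (fun h : e = a => ha (h ▸ he))]

theorem ev_add {n : ℕ} (i j k : Fin (n+1)) : (ev i k : Vtype n) = ev i j + ev j k := by
  simp [ev]

theorem cone_red {n : ℕ} {E : EdgeSet n} (h : Good E) {i j k : Fin (n+1)}
    (hij : i < j) (hjk : j < k) (h1 : (i, j) ∈ E) (h2 : (j, k) ∈ E) :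
    cone E = cone (red1 E i j k) ∪ cone (red2 E i j k) ∧
    cone (red1 E i j k) ∩ cone (red2 E i j k) = cone (red3 E i j k) := by
  have h3 := good_not_mem h hij hjk h1 h2
  have hne : ((i, j) : Edge n) ≠ (j, k) := by simp [hij.ne]
  have hne2 : ((i, k) : Edge n) ≠ (j, k) := by simp [hij.ne]
  have hne3 : ((i, k) : Edge n) ≠ (i, j) := by simp [hjk.ne']
  obtain ⟨p, pa, pb⟩ := h.2 _ h1
  obtain ⟨q, qa, qb⟩ := h.2 _ h2
  have pq := pb _ h2 hne.symm
  have qp := qb _ h1 hne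
  simp only at pa qa pq qp
  set B := (E.erase (i, j)).erase (j, k) with hB
  have b1 : (i, j) ∉ B := by simp [hB]
  have b2 : (j, k) ∉ B := by simp [hB]
  have b3 : (i, k) ∉ B := by simp [hB, h3]
  have pB : ∀ f ∈ B, p f.1 = p f.2 := by
    intro f hf
    simp only [hB, Finset.mem_erase] at hf
    exact pb f hf.2.2 hf.2.1
  have qB : ∀ f ∈ B, q f.1 = q f.2 := by
    intro f hf
    simp only [hB, Finset.mem_erase] at hf
    exact qb f hf.2.2 hf.1
  have E0 : E = insert (i, j) (insert (j, k) B) := by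
    ext f
    simp only [hB, Finset.mem_insert, Finset.mem_erase]
    have k1 : f = (i, j) → f ∈ E := fun hh => hh ▸ h1
    have k2 : f = (j, k) → f ∈ E := fun hh => hh ▸ h2
    have k3 : f = (i, j) → f ≠ (j, k) := fun hh => hh ▸ hne
    tauto
  have E1 : red1 E i j k = insert (i, k) (insert (i, j) B) := by
    ext f
    simp only [red1, hB, Finset.mem_insert, Finset.mem_erase]
    have k1 : f = (i, j) → f ∈ E := fun hh => hh ▸ h1
    have k2 : f = (j, k) → f ∈ E := fun hh => hh ▸ h2
    have k3 : f = (i, j) → f ≠ (j, k) := fun hh => hh ▸ hne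
    tauto
  have E2 : red2 E i j k = insert (i, k) (insert (j, k) B) := by
    ext f
    simp only [red2, hB, Finset.mem_insert, Finset.mem_erase]
    have k1 : f = (i, j) → f ∈ E := fun hh => hh ▸ h1
    have k2 : f = (j, k) → f ∈ E := fun hh => hh ▸ h2
    have k3 : f = (i, j) → f ≠ (j, k) := fun hh => hh ▸ hne
    tauto
  have E3 : red3 E i j k = insert (i, k) B := rfl
  have m0 : ∀ x, x ∈ cone E ↔ ∃ s : ℝ, 0 ≤ s ∧ ∃ u : ℝ, 0 ≤ u ∧ ∃ b ∈ cone B,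
      x = s • ev i j + (u • ev j k + b) := by
    intro x
    rw [E0, mem_cone_insert (by simp [b1, hne])]
    simp only [mem_cone_insert b2]
    constructor
    · rintro ⟨s, hs, _, ⟨u, hu, b, hb, rfl⟩, rfl⟩; exact ⟨s, hs, u, hu, b, hb, rfl⟩
    · rintro ⟨s, hs, u, hu, b, hb, rfl⟩; exact ⟨s, hs, _, ⟨u, hu, b, hb, rfl⟩, rfl⟩
  have m1 : ∀ x, x ∈ cone (red1 E i j k) ↔ ∃ s : ℝ, 0 ≤ s ∧ ∃ u : ℝ, 0 ≤ u ∧ ∃ b ∈ cone B,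
      x = s • ev i k + (u • ev i j + b) := by
    intro x
    rw [E1, mem_cone_insert (by simp [b3, hjk.ne'])]
    simp only [mem_cone_insert b1]
    constructor
    · rintro ⟨s, hs, _, ⟨u, hu, b, hb, rfl⟩, rfl⟩; exact ⟨s, hs, u, hu, b, hb, rfl⟩
    · rintro ⟨s, hs, u, hu, b, hb, rfl⟩; exact ⟨s, hs, _, ⟨u, hu, b, hb, rfl⟩, rfl⟩
  have m2 : ∀ x, x ∈ cone (red2 E i j k) ↔ ∃ s : ℝ, 0 ≤ s ∧ ∃ u : ℝ, 0 ≤ u ∧ ∃ b ∈ cone B,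
      x = s • ev i k + (u • ev j k + b) := by
    intro x
    rw [E2, mem_cone_insert (by simp [b3, hij.ne])]
    simp only [mem_cone_insert b2]
    constructor
    · rintro ⟨s, hs, _, ⟨u, hu, b, hb, rfl⟩, rfl⟩; exact ⟨s, hs, u, hu, b, hb, rfl⟩
    · rintro ⟨s, hs, u, hu, b, hb, rfl⟩; exact ⟨s, hs, _, ⟨u, hu, b, hb, rfl⟩, rfl⟩
  have m3 : ∀ x, x ∈ cone (red3 E i j k) ↔ ∃ s : ℝ, 0 ≤ s ∧ ∃ b ∈ cone B,
      x = s • ev i k + b := by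
    intro x
    rw [E3, mem_cone_insert b3]
  constructor
  · ext x
    rw [Set.mem_union, m0, m1, m2]
    constructor
    · rintro ⟨s, hs, u, hu, b, hb, rfl⟩
      rcases le_total u s with hle | hle
      · left
        exact ⟨u, hu, s - u, sub_nonneg.mpr hle, b, hb, by rw [ev_add i j k]; module⟩
      · right
        exact ⟨s, hs, u - s, sub_nonneg.mpr hle, b, hb, by rw [ev_add i j k]; module⟩
    · rintro (⟨s, hs, u, hu, b, hb, rfl⟩ | ⟨s, hs, u, hu, b, hb, rfl⟩)
      · exact ⟨s + u, by positivity, s, hs, b, hb, by rw [ev_add i j k]; module⟩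
      · exact ⟨s, hs, s + u, by positivity, b, hb, by rw [ev_add i j k]; module⟩
  · ext x
    rw [Set.mem_inter_iff, m1, m2, m3]
    constructor
    · rintro ⟨⟨s, hs, u, hu, b, hb, rfl⟩, ⟨s', hs', u', hu', b', hb', he⟩⟩
      have r1 : (p i : ℝ) - p j = 1 := by exact_mod_cast pa
      have r2 : (q j : ℝ) - q k = 1 := by exact_mod_cast qa
      have r3 : (p j : ℝ) = p k := by exact_mod_cast pq
      have r4 : (q i : ℝ) = q j := by exact_mod_cast qp
      have e1 := congrArg (pr p) he
      have e2 := congrArg (pr q) he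
      simp only [pr_add, pr_smul, pr_ev, pr_cone_zero pB hb, pr_cone_zero pB hb'] at e1
      simp only [pr_add, pr_smul, pr_ev, pr_cone_zero qB hb, pr_cone_zero qB hb'] at e2
      rw [← r3, r1, sub_self] at e1
      rw [r4, r2, sub_self] at e2
      have : u = 0 := by linarith
      subst this
      exact ⟨s, hs, b, hb, by simp⟩
    · rintro ⟨s, hs, b, hb, rfl⟩
      exact ⟨⟨s, hs, 0, le_rfl, b, hb, by simp⟩, ⟨s, hs, 0, le_rfl, b, hb, by simp⟩⟩

theorem mem_cone_add {n : ℕ} {E : EdgeSet n} {x y : Vtype n} (hx : x ∈ cone E) (hy : y ∈ cone E)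
    {a b : ℝ} (ha : 0 ≤ a) (hb : 0 ≤ b) : a • x + b • y ∈ cone E := by
  obtain ⟨c, hc, rfl⟩ := hx
  obtain ⟨d, hd, rfl⟩ := hy
  refine ⟨fun e => a * c e + b * d e, fun e => ?_, ?_⟩
  · have := hc e
    have := hd e
    positivity
  · rw [Finset.smul_sum, Finset.smul_sum, ← Finset.sum_add_distrib]
    exact Finset.sum_congr rfl fun e _ => by module

theorem zero_mem_cone {n : ℕ} (E : EdgeSet n) : (0 : Vtype n) ∈ cone E :=
  ⟨fun _ => 0, fun _ => le_rfl, by simp⟩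

theorem ev_mem_cone {n : ℕ} {E : EdgeSet n} {e : Edge n} (he : e ∈ E) :
    ev e.1 e.2 ∈ cone E := by
  refine ⟨fun f => if f = e then 1 else 0, fun f => by dsimp only; split_ifs <;> norm_num, ?_⟩
  rw [Finset.sum_eq_single_of_mem e he]
  · simp
  · intro f _ hf
    simp [hf]

theorem l1_ev {n : ℕ} (a b : Fin (n+1)) : ∑ i, |(ev a b : Vtype n) i| ≤ 2 := by
  calc ∑ i, |(ev a b : Vtype n) i|
      ≤ ∑ i, ((Pi.single a (1:ℝ) : Vtype n) i + (Pi.single b (1:ℝ) : Vtype n) i) := by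
        refine Finset.sum_le_sum fun i _ => ?_
        simp only [ev, Pi.sub_apply, Pi.single_apply]
        split_ifs <;> norm_num
    _ = 2 := by
        rw [Finset.sum_add_distrib]; simp; norm_num

theorem l1_add {n : ℕ} (x y : Vtype n) {a b : ℝ} (ha : 0 ≤ a) (hb : 0 ≤ b) :
    ∑ i, |(a • x + b • y) i| ≤ a * ∑ i, |x i| + b * ∑ i, |y i| := by
  rw [Finset.mul_sum, Finset.mul_sum, ← Finset.sum_add_distrib]
  refine Finset.sum_le_sum fun i _ => ?_
  simp only [Pi.add_apply, Pi.smul_apply, smul_eq_mul]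
  calc |a * x i + b * y i| ≤ |a * x i| + |b * y i| := abs_add_le _ _
    _ = a * |x i| + b * |y i| := by rw [abs_mul, abs_mul, abs_of_nonneg ha, abs_of_nonneg hb]

theorem rootPoly_sub {n : ℕ} (E : EdgeSet n) :
    RootPoly E ⊆ {x | x ∈ cone E ∧ ∑ i, |x i| ≤ 2} := by
  apply convexHull_min
  · rintro x (hx | ⟨⟨i, j, hij, rfl⟩, hx⟩)
    · rw [Set.mem_singleton_iff] at hx
      subst hx
      exact ⟨zero_mem_cone E, by simp⟩
    · exact ⟨hx, l1_ev i j⟩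
  · rintro x ⟨hx1, hx2⟩ y ⟨hy1, hy2⟩ a b ha hb hab
    refine ⟨mem_cone_add hx1 hy1 ha hb, (l1_add x y ha hb).trans ?_⟩
    nlinarith

theorem rootPoly_mono {n : ℕ} {E E' : EdgeSet n} (h : cone E' ⊆ cone E) :
    RootPoly E' ⊆ RootPoly E :=
  convexHull_mono (Set.union_subset_union_right _ (Set.inter_subset_inter_right _ h))

/-- For an alternating graph the coefficients are controlled by the `l1` norm. -/
theorem alt_l1_ge {n : ℕ} {E : EdgeSet n} (hg : IsGraph E) (ha : Alternating E)
    (c : Edge n → ℝ) :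
    2 * ∑ e ∈ E, c e ≤ ∑ i, |(∑ e ∈ E, c e • ev e.1 e.2 : Vtype n) i| := by
  classical
  let σ : Fin (n+1) → ℤ := fun i => if ∃ k, (i, k) ∈ E then 1 else -1
  have h1 : pr σ (∑ e ∈ E, c e • ev e.1 e.2) = 2 * ∑ e ∈ E, c e := by
    rw [pr_sum, Finset.mul_sum]
    refine Finset.sum_congr rfl fun e he => ?_
    rw [pr_smul, pr_ev]
    have s1 : σ e.1 = 1 := if_pos ⟨e.2, he⟩
    have s2 : σ e.2 = -1 := if_neg (by
      rintro ⟨k, hk⟩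
      exact ha ⟨e.1, e.2, k, hg e he, hg _ hk, he, hk⟩)
    rw [s1, s2]; push_cast; ring
  rw [← h1, pr]
  refine Finset.sum_le_sum fun i _ => ?_
  have : (σ i : ℝ) = 1 ∨ (σ i : ℝ) = -1 := by
    by_cases h : ∃ k, (i, k) ∈ E
    · left; simp [σ, h]
    · right; simp [σ, h]
  rcases this with h | h <;> rw [h]
  · rw [one_mul]; exact le_abs_self _
  · rw [neg_one_mul]; exact neg_le_abs _

theorem l1_le {n : ℕ} (E : EdgeSet n) {c : Edge n → ℝ} (hc : ∀ e, 0 ≤ c e) :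
    ∑ i, |(∑ e ∈ E, c e • ev e.1 e.2 : Vtype n) i| ≤ 2 * ∑ e ∈ E, c e := by
  classical
  induction E using Finset.induction_on with
  | empty => simp
  | insert a s ha ih =>
    rw [Finset.sum_insert ha, Finset.sum_insert ha]
    have := l1_add (ev a.1 a.2) (∑ e ∈ s, c e • ev e.1 e.2) (hc a) zero_le_one
    rw [one_smul] at this
    have h2 := l1_ev a.1 a.2
    have h3 := hc a
    nlinarith

theorem alt_rootPoly {n : ℕ} {E : EdgeSet n} (hg : IsGraph E) (ha : Alternating E)
    {x : Vtype n} (hx : x ∈ cone E) {t : ℕ} (ht : 0 < t) (h : ∑ i, |x i| ≤ 2 * t) :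
    x ∈ dilate t (RootPoly E) := by
  obtain ⟨c, hc, rfl⟩ := hx
  have h1 := (alt_l1_ge hg ha c).trans h
  have h2 : ∑ e ∈ E, c e ≤ t := by linarith
  have ht' : (0 : ℝ) < t := by exact_mod_cast ht
  refine ⟨(t : ℝ)⁻¹ • ∑ e ∈ E, c e • ev e.1 e.2, ?_, ?_⟩
  · have hconv : Convex ℝ (RootPoly E) := convex_convexHull ℝ _
    have h0 : (0 : Vtype n) ∈ RootPoly E := subset_convexHull ℝ _ (Or.inl rfl)
    have := hconv.sum_mem (t := insert none (E.map Function.Embedding.some))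
      (w := fun o => o.elim (1 - ∑ e ∈ E, (t : ℝ)⁻¹ * c e) (fun e => (t : ℝ)⁻¹ * c e))
      (z := fun o => o.elim 0 (fun e => ev e.1 e.2)) ?_ ?_ ?_
    · rw [Finset.sum_insert (by simp)] at this
      simpa [Finset.smul_sum, smul_smul] using this
    · rintro (_ | e) _
      · simp only [Option.elim_none, ← Finset.mul_sum, sub_nonneg]
        rw [inv_mul_le_iff₀ ht']; linarith
      · have := hc e
        simp only [Option.elim_some]; positivity
    · rw [Finset.sum_insert (by simp)]
      simp
    · rintro (_ | e) he
      · exact h0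
      · have he' : e ∈ E := by simpa using he
        exact subset_convexHull ℝ _ (Or.inr ⟨⟨e.1, e.2, hg e he', rfl⟩, ev_mem_cone he'⟩)
  · simp only [smul_smul]
    rw [mul_inv_cancel₀ ht'.ne', one_smul]

theorem cover {n : ℕ} (R : SRTree n) : R.Valid → Good R.root → ∀ (x : Vtype n), x ∈ cone R.root →
    ∀ t : ℕ, 0 < t → ∑ i, |x i| ≤ 2 * t → x ∈ dilate t (RootPoly R.root) := by
  induction R with
  | leaf E =>
    intro hv hg x hx t ht h
    exact alt_rootPoly hg.1 hv hx ht h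
  | node E t1 t2 t3 ih1 ih2 ih3 =>
    rintro ⟨⟨i, j, k, hij, hjk, h1, h2, r1, r2, r3⟩, v1, v2, v3⟩ hg x hx t ht h
    simp only [SRTree.root] at hg hx ⊢
    have hc := (cone_red hg hij hjk h1 h2).1
    rw [r1] at ih1
    rw [r2] at ih2
    rw [hc] at hx
    rcases hx with hx | hx
    · exact Set.image_mono (rootPoly_mono (hc ▸ Set.subset_union_left))
        (ih1 v1 (good_red1 hg hij hjk h1 h2) x hx t ht h)
    · exact Set.image_mono (rootPoly_mono (hc ▸ Set.subset_union_right))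
        (ih2 v2 (good_red2 hg hij hjk h1 h2) x hx t ht h)

/-- Integer points of the cone with bounded `l1` norm. -/
def NS {n : ℕ} (E : EdgeSet n) (t : ℕ) : Set (Fin (n+1) → ℤ) :=
  {z | (fun i => (z i : ℝ)) ∈ cone E ∧ ∑ i, |(z i : ℝ)| ≤ 2 * t}

theorem NS_finite {n : ℕ} (E : EdgeSet n) (t : ℕ) : (NS E t).Finite := by
  apply (Set.finite_Icc (fun _ => -(2 * t : ℤ)) (fun _ => (2 * t : ℤ))).subset
  rintro z ⟨-, hz⟩
  have : ∀ i, |z i| ≤ 2 * t := by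
    intro i
    have h1 := Finset.single_le_sum (f := fun i => |(z i : ℝ)|) (fun _ _ => abs_nonneg _)
      (Finset.mem_univ i)
    have h2 := h1.trans hz
    exact_mod_cast h2
  exact ⟨fun i => (abs_le.mp (this i)).1, fun i => (abs_le.mp (this i)).2⟩

theorem latticeCount_eq {n : ℕ} {R : SRTree n} (hv : R.Valid) (hg : Good R.root) {t : ℕ}
    (ht : 0 < t) : latticeCount (RootPoly R.root) t = (NS R.root t).ncard := by
  have hinj : Function.Injective (fun (z : Fin (n+1) → ℤ) => (fun i => (z i : ℝ))) := by
    intro a b hab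
    ext i
    have := congrFun hab i
    simp only at this
    exact_mod_cast this
  rw [latticeCount, ← Set.ncard_image_of_injective _ hinj]
  congr 1
  ext x
  constructor
  · rintro ⟨⟨y, hy, rfl⟩, hz⟩
    obtain ⟨h1, h2⟩ := rootPoly_sub _ hy
    choose z hz using hz
    refine ⟨z, ?_, (funext hz).symm⟩
    have e : (fun i => (z i : ℝ)) = (t : ℝ) • y := (funext hz).symm
    refine ⟨?_, ?_⟩
    · rw [e]
      have := mem_cone_add h1 h1 (a := t) (b := 0) (by positivity) le_rfl
      simpa using this
    · have : ∀ i, |(z i : ℝ)| = t * |y i| := by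
        intro i
        rw [← hz i]; simp [abs_mul]
      simp only [this, ← Finset.mul_sum]
      have : (0 : ℝ) ≤ t := by positivity
      nlinarith
  · rintro ⟨z, ⟨h1, h2⟩, rfl⟩
    exact ⟨cover R hv hg _ h1 t ht h2, fun i => ⟨z i, rfl⟩⟩

theorem NS_red {n : ℕ} {E : EdgeSet n} (h : Good E) {i j k : Fin (n+1)}
    (hij : i < j) (hjk : j < k) (h1 : (i, j) ∈ E) (h2 : (j, k) ∈ E) (t : ℕ) :
    (NS E t).ncard + (NS (red3 E i j k) t).ncard =
      (NS (red1 E i j k) t).ncard + (NS (red2 E i j k) t).ncard := by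
  obtain ⟨c1, c2⟩ := cone_red h hij hjk h1 h2
  have e1 : NS E t = NS (red1 E i j k) t ∪ NS (red2 E i j k) t := by
    ext z
    simp only [NS, c1, Set.mem_union, Set.mem_ofPred_eq]; tauto
  have e2 : NS (red3 E i j k) t = NS (red1 E i j k) t ∩ NS (red2 E i j k) t := by
    ext z
    simp only [NS, ← c2, Set.mem_inter_iff, Set.mem_ofPred_eq]; tauto
  rw [e1, e2]
  exact Set.ncard_union_add_ncard_inter _ _ (NS_finite _ _) (NS_finite _ _)

theorem NS_alt {n : ℕ} {E : EdgeSet n} (hg : Good E) (ha : Alternating E) (t : ℕ) :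
    (NS E t).ncard = (t + E.card).choose E.card := by
  classical
  let T : Type := {P : Option E → ℕ // ∑ i, P i = t}
  let w : T → (Fin (n+1) → ℤ) := fun P v =>
    ∑ e : E, (P.1 (some e) : ℤ) * ((Pi.single e.1.1 1 - Pi.single e.1.2 1 : Fin (n+1) → ℤ) v)
  let c : T → Edge n → ℝ := fun P e => if he : e ∈ E then (P.1 (some ⟨e, he⟩) : ℝ) else 0
  have hc0 : ∀ P e, 0 ≤ c P e := by
    intro P e
    simp only [c]; split_ifs <;> positivity
  have hcs : ∀ P (e : E), c P e = P.1 (some e) := by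
    intro P e
    simp [c]
  have hw : ∀ P, (fun i => (w P i : ℝ)) = ∑ e ∈ E, c P e • ev e.1 e.2 := by
    intro P
    rw [← Finset.sum_coe_sort E (fun e => c P e • ev e.1 e.2)]
    ext v
    simp only [w, hcs, Finset.sum_apply, Pi.smul_apply, smul_eq_mul, ev, Pi.sub_apply,
      Pi.single_apply]
    push_cast
    rfl
  have hsum : ∀ P, ∑ e ∈ E, c P e ≤ t := by
    intro P
    rw [← Finset.sum_coe_sort E (fun e => c P e)]
    simp only [hcs]
    have := P.2
    rw [Fintype.sum_option] at this
    have h2 : ∑ e : E, P.1 (some e) ≤ t := by omega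
    exact_mod_cast h2
  have hinj : Function.Injective w := by
    intro P Q hPQ
    have h0 : ∀ e : E, P.1 (some e) = Q.1 (some e) := by
      intro e
      obtain ⟨φ, f1, f2⟩ := hg.2 e.1 e.2
      have h1 := pr_dual e.2 f1 f2 (c P)
      have h2 := pr_dual e.2 f1 f2 (c Q)
      rw [← hw, hPQ, hw, h2, hcs, hcs] at h1
      exact_mod_cast h1.symm
    apply Subtype.ext
    funext o
    rcases o with _ | e
    · have h1 := P.2
      have h2 := Q.2
      rw [Fintype.sum_option] at h1 h2
      simp only [h0] at h1
      omega
    · exact h0 e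
  have hrange : NS E t = Set.range w := by
    ext z
    constructor
    · rintro ⟨⟨d, hd, hz⟩, hl⟩
      have hint : ∀ e : E, ∃ m : ℕ, d e = m := by
        intro e
        obtain ⟨φ, f1, f2⟩ := hg.2 e.1 e.2
        have h1 := pr_dual e.2 f1 f2 d
        rw [← hz] at h1
        have h2 : d e = ((∑ i, φ i * z i : ℤ) : ℝ) := by
          rw [← h1, pr]; push_cast; rfl
        have h3 : 0 ≤ (∑ i, φ i * z i : ℤ) := by
          have := hd e
          rw [h2] at this
          exact_mod_cast this
        obtain ⟨m, hm⟩ := Int.eq_ofNat_of_zero_le h3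
        exact ⟨m, by rw [h2, hm]; simp⟩
      choose m hm using hint
      have hle : ∑ e : E, m e ≤ t := by
        have h1 := alt_l1_ge hg.1 ha d
        rw [← hz] at h1
        have h2 := h1.trans hl
        rw [← Finset.sum_coe_sort E d] at h2
        simp only [hm] at h2
        have h3 : ((∑ e : E, m e : ℕ) : ℝ) ≤ t := by push_cast; linarith
        exact_mod_cast h3
      let P : T := ⟨fun o => o.elim (t - ∑ e : E, m e) m, by
        rw [Fintype.sum_option]; simp only [Option.elim_none, Option.elim_some]; omega⟩
      refine ⟨P, ?_⟩
      have h5 : (fun i => (w P i : ℝ)) = fun i => (z i : ℝ) := by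
        rw [hw, hz]
        refine Finset.sum_congr rfl fun e he => ?_
        have := hcs P ⟨e, he⟩
        have h6 := hm ⟨e, he⟩
        simp only at this h6
        rw [this, h6]
        rfl
      funext i
      have := congrFun h5 i
      exact_mod_cast this
    · rintro ⟨P, rfl⟩
      refine ⟨⟨c P, hc0 P, hw P⟩, ?_⟩
      have h1 := l1_le E (hc0 P)
      rw [← hw P] at h1
      have := hsum P
      linarith
  have hcard : (Set.range w).ncard = Nat.card T := by
    rw [← Set.image_univ, Set.ncard_image_of_injective _ hinj, Set.ncard_univ]
  rw [hrange, hcard, ← Nat.card_congr (Sym.equivNatSumOfFintype (Option E) t),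
    Nat.card_eq_fintype_card, Sym.card_sym_eq_choose, Fintype.card_option, Fintype.card_coe]
  have : E.card + 1 + t - 1 = t + E.card := by omega
  rw [this]
  exact Nat.choose_symm_add

theorem tendsto_choose (m : ℕ) :
    Filter.Tendsto (fun t : ℕ => (((t + m).choose m : ℕ) : ℝ) / (t : ℝ) ^ m)
      Filter.atTop (nhds (1 / (Nat.factorial m : ℝ))) := by
  have h : ∀ r : ℕ, Filter.Tendsto (fun t : ℕ => ((t : ℝ) + r) / t) Filter.atTop (nhds 1) := by
    intro r
    have h1 : Filter.Tendsto (fun t : ℕ => 1 + (r : ℝ) / t) Filter.atTop (nhds (1 + 0)) :=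
      tendsto_const_nhds.add (tendsto_const_div_atTop_nhds_zero_nat (r : ℝ))
    rw [add_zero] at h1
    refine h1.congr' ?_
    filter_upwards [Filter.eventually_gt_atTop 0] with t ht
    have : (t : ℝ) ≠ 0 := by exact_mod_cast ht.ne'
    field_simp
  induction m with
  | zero => simp
  | succ m ih =>
    have h2 := (ih.mul (h (m + 1))).div_const ((m : ℝ) + 1)
    have e : 1 / (Nat.factorial m : ℝ) * 1 / ((m : ℝ) + 1) = 1 / (Nat.factorial (m + 1) : ℝ) := by
      rw [Nat.factorial_succ]; push_cast; field_simp
    rw [e] at h2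
    refine h2.congr fun t => ?_
    have h3 : ((t + (m + 1)).choose (m + 1) : ℝ) * (m + 1) = (t + m + 1) * ((t + m).choose m) := by
      have := Nat.add_one_mul_choose_eq (t + m) m
      rw [← add_assoc]
      exact_mod_cast this.symm
    have h4 : ((t + (m + 1)).choose (m + 1) : ℝ) = (t + m + 1) * ((t + m).choose m) / (m + 1) := by
      rw [eq_div_iff (by positivity)]; exact h3
    rw [h4, pow_succ]
    push_cast
    rw [div_mul_div_comm, div_div, div_div, mul_comm ((m : ℝ) + 1)]
    congr 1
    ring

theorem leafCount_zero {n : ℕ} (l : ℕ) (R : SRTree n) : R.Valid → R.root.card < l →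
    R.leafCount l = 0 := by
  induction R with
  | leaf E =>
    intro _ h
    simp only [SRTree.root] at h
    simp [SRTree.leafCount, h.ne]
  | node E t1 t2 t3 ih1 ih2 ih3 =>
    rintro ⟨⟨i, j, k, hij, hjk, h1, h2, r1, r2, r3⟩, v1, v2, v3⟩ h
    simp only [SRTree.root] at h
    have c1 := card_red1 i j k h2
    have c2 := card_red2 i j k h1
    have c3 := card_red3 hij h1 h2
    simp only [SRTree.leafCount]
    rw [ih1 v1 (by rw [r1]; omega), ih2 v2 (by rw [r2]; omega), ih3 v3 (by rw [r3]; omega)]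

theorem main_tendsto {n : ℕ} (l : ℕ) (R : SRTree n) : R.Valid → Good R.root → R.root.card ≤ l →
    Filter.Tendsto (fun t : ℕ => ((NS R.root t).ncard : ℝ) / (t : ℝ) ^ l)
      Filter.atTop (nhds ((R.leafCount l : ℝ) / (Nat.factorial l : ℝ))) := by
  induction R with
  | leaf E =>
    intro hv hg hl
    simp only [SRTree.root] at hl hg ⊢
    simp only [NS_alt hg hv, SRTree.leafCount]
    rcases hl.lt_or_eq with h | h
    · rw [if_neg h.ne]
      have h1 := tendsto_choose E.card
      have h2 : Filter.Tendsto (fun t : ℕ => ((t : ℝ) ^ (l - E.card))⁻¹) Filter.atTop (nhds 0) :=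
        ((Filter.tendsto_pow_atTop (by omega)).comp tendsto_natCast_atTop_atTop).inv_tendsto_atTop
      have h3 := h1.mul h2
      rw [mul_zero] at h3
      simp only [Nat.cast_zero, zero_div]
      refine h3.congr fun t => ?_
      rw [← div_eq_mul_inv, div_div, ← pow_add, Nat.add_sub_cancel' hl]
    · subst h
      simpa using tendsto_choose E.card
  | node E t1 t2 t3 ih1 ih2 ih3 =>
    rintro ⟨⟨i, j, k, hij, hjk, h1, h2, r1, r2, r3⟩, v1, v2, v3⟩ hg hl
    simp only [SRTree.root] at hg hl ⊢
    have c1 := card_red1 i j k h2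
    have c2 := card_red2 i j k h1
    have c3 := card_red3 hij h1 h2
    have z3 := leafCount_zero l t3 v3 (by rw [r3]; omega)
    rw [r1] at ih1
    rw [r2] at ih2
    rw [r3] at ih3
    have l1 := ih1 v1 (good_red1 hg hij hjk h1 h2) (by omega)
    have l2 := ih2 v2 (good_red2 hg hij hjk h1 h2) (by omega)
    have l3 := ih3 v3 (good_red3 hg hij hjk h1 h2) (by omega)
    have l4 := (l1.add l2).sub l3
    have e : (t1.leafCount l : ℝ) / (Nat.factorial l : ℝ) + (t2.leafCount l : ℝ) / (Nat.factorial l)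
        - (t3.leafCount l : ℝ) / (Nat.factorial l)
        = ((SRTree.node E t1 t2 t3).leafCount l : ℝ) / (Nat.factorial l) := by
      simp only [SRTree.leafCount, z3]
      push_cast
      ring
    rw [e] at l4
    refine l4.congr fun t => ?_
    have h := NS_red hg hij hjk h1 h2 t
    have h' : ((NS E t).ncard : ℝ) = (NS (red1 E i j k) t).ncard + (NS (red2 E i j k) t).ncard
        - (NS (red3 E i j k) t).ncard := by
      rw [eq_sub_iff_add_eq]; exact_mod_cast h
    rw [h']; ring

/- STATEMENT 10 -/
theorem stmt10 {n : ℕ} (hn : 1 ≤ n) (F : EdgeSet n) (hF : IsForest F) (l : ℕ)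
    (hl : F.card = l) (R : SRTree n) (hR : R.Valid) (hr : R.root = F) :
    Filter.Tendsto (fun t : ℕ => (latticeCount (RootPoly F) t : ℝ) / (t : ℝ) ^ l)
      Filter.atTop (nhds ((R.leafCount l : ℝ) / (Nat.factorial l : ℝ))) := by
  subst hr
  have hg := good_of_forest hF
  refine (main_tendsto l R hR hg hl.le).congr' ?_
  filter_upwards [Filter.eventually_gt_atTop 0] with t ht
  rw [latticeCount_eq hR hg ht]

end RPaper
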